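/- arXiv:0808.3262 — 2 statements merged into one kernel-verified Lean document; each statement's English description precedes it below -/
import Mathlib

section
/- Let L be a Lie algebra over a field F of characteristic p > 0, and let S(L) denote the sum of all solvable ideals of L. If S(L) is solvable of derived length n with n < log₂ p (equivalently 2ⁿ < p), then S(L) is a characteristic ideal of L, i.e. D(S(L)) ⊆ S(L) for every derivation D of L. -/
/-!
Filter `L` by the ideals `I_s = {a | a, D a, …, D^(s-1) a ∈ I}`. By the Leibniz rule
`[I_s, I_t] ⊆ I_(s+t)`, so the `k`-th derived ideal of `I` lies in `I_(2^k)`, and for `a ∈ I_s`,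
`b ∈ I_t` a single term of `D^(s+t) [a, b]` survives modulo `I`, namely
`(s+t choose s) [D^s a, D^t b]`. As long as the binomial coefficients `(2^(k+1) choose 2^k)` are
invertible, induction shows that the `k`-th derived ideal of `I + D(I)` is contained in
`I + D^(2^k) (I^(k))`. If `I^(n) = 0`, then the `n`-th derived ideal of `I + D(I)` is therefore
contained in `I`, and `I + D(I)` is solvable. Applied to the sum of all solvable ideals, this
forces `I + D(I) ⊆ I`.
-/

open LieAlgebra Finset.HasAntidiagonal
open scoped Nat

theorem isUnit_natCast_choose_of_isUnit_factorial {A : Type*} [CommSemiring A] {m k : ℕ}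
    (hk : k ≤ m) (hm : IsUnit (m ! : A)) : IsUnit (m.choose k : A) := by
  rw [← Nat.choose_mul_factorial_mul_factorial hk, mul_assoc, Nat.cast_mul] at hm
  exact isUnit_of_mul_isUnit_left hm

section Leibniz

variable {R L : Type*} [CommRing R] [LieRing L] [LieAlgebra R L]
  (D : LieDerivation R L L) (I : LieIdeal R L)

theorem derivation_pow_apply_lie (n : ℕ) (a b : L) :
    (D.toLinearMap ^ n) ⁅a, b⁆ = ∑ ij ∈ antidiagonal n,
      n.choose ij.1 • ⁅(D.toLinearMap ^ ij.1) a, (D.toLinearMap ^ ij.2) b⁆ := by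
  simpa only [Module.End.pow_apply, D.coeFn_coe] using D.iterate_apply_lie n a b

variable {D I} {s t : ℕ} {a b : L}

theorem derivation_pow_lie_mem (ha : ∀ i < s, (D.toLinearMap ^ i) a ∈ I)
    (hb : ∀ i < t, (D.toLinearMap ^ i) b ∈ I) {j : ℕ} (hj : j < s + t) :
    (D.toLinearMap ^ j) ⁅a, b⁆ ∈ I := by
  rw [derivation_pow_apply_lie]
  refine sum_mem fun ij hij ↦ nsmul_mem ?_ _
  rw [mem_antidiagonal] at hij
  obtain h | h : ij.1 < s ∨ ij.2 < t := by omega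
  · exact lie_mem_left R L I _ _ (ha _ h)
  · exact lie_mem_right R L I _ _ (hb _ h)

theorem derivation_pow_lie_sub_choose_smul_lie_mem (ha : ∀ i < s, (D.toLinearMap ^ i) a ∈ I)
    (hb : ∀ i < t, (D.toLinearMap ^ i) b ∈ I) :
    (D.toLinearMap ^ (s + t)) ⁅a, b⁆ -
      (s + t).choose s • ⁅(D.toLinearMap ^ s) a, (D.toLinearMap ^ t) b⁆ ∈ I := by
  have hst : (s, t) ∈ antidiagonal (s + t) := mem_antidiagonal.mpr rfl
  rw [derivation_pow_apply_lie, ← Finset.add_sum_erase _ _ hst, add_sub_cancel_left]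
  refine sum_mem fun ij hij ↦ nsmul_mem ?_ _
  rw [Finset.mem_erase, mem_antidiagonal, ne_eq, Prod.ext_iff] at hij
  obtain h | h : ij.1 < s ∨ ij.2 < t := by omega
  · exact lie_mem_left R L I _ _ (ha _ h)
  · exact lie_mem_right R L I _ _ (hb _ h)

end Leibniz

section DerivationFiltration

variable {R L : Type*} [CommRing R] [LieRing L] [LieAlgebra R L]
  (D : LieDerivation R L L) (I : LieIdeal R L)

/-- The `s`-th term `{a | a, D a, …, D^(s-1) a ∈ I}` of the decreasing filtration of `L` that
measures how often `D` can be applied without leaving the ideal `I`. The indexing is such that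
the term at `0` is `L` and the term at `1` is `I`. -/
def derivationFiltration (s : ℕ) : LieIdeal R L where
  carrier := {a | ∀ i < s, (D.toLinearMap ^ i) a ∈ I}
  add_mem' ha hb i hi := by
    rw [map_add]
    exact I.add_mem (ha i hi) (hb i hi)
  zero_mem' i _ := by
    rw [map_zero]
    exact I.zero_mem
  smul_mem' c a ha i hi := by
    rw [map_smul]
    exact I.smul_mem c (ha i hi)
  lie_mem ha i hi :=
    derivation_pow_lie_mem (s := 0) (fun _ h ↦ absurd h (Nat.not_lt_zero _)) ha (by omega)

variable {D I}

theorem mem_derivationFiltration {s : ℕ} {a : L} :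
    a ∈ derivationFiltration D I s ↔ ∀ i < s, (D.toLinearMap ^ i) a ∈ I :=
  Iff.rfl

theorem lie_derivationFiltration_le (s t : ℕ) :
    ⁅derivationFiltration D I s, derivationFiltration D I t⁆ ≤ derivationFiltration D I (s + t) :=
  (LieSubmodule.lie_le_iff _ _ _).mpr fun _ ha _ hb ↦ mem_derivationFiltration.mpr fun _ hi ↦
    derivation_pow_lie_mem (mem_derivationFiltration.mp ha) (mem_derivationFiltration.mp hb) hi

variable (D I) in
theorem derivedSeriesOfIdeal_le_derivationFiltration (k : ℕ) :
    derivedSeriesOfIdeal R L k I ≤ derivationFiltration D I (2 ^ k) := by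
  induction k with
  | zero =>
    refine fun a ha ↦ mem_derivationFiltration.mpr fun i hi ↦ ?_
    obtain rfl : i = 0 := by simpa using hi
    simpa using ha
  | succ k ih =>
    rw [derivedSeriesOfIdeal_succ, pow_succ, mul_two]
    exact (LieSubmodule.mono_lie ih ih).trans (lie_derivationFiltration_le _ _)

theorem choose_smul_lie_mem_sup_map_pow {A B : LieIdeal R L} {s t : ℕ}
    (hA : A ≤ derivationFiltration D I s) (hB : B ≤ derivationFiltration D I t) {x y : L}
    (hx : x ∈ I.toSubmodule ⊔ A.toSubmodule.map (D.toLinearMap ^ s))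
    (hy : y ∈ I.toSubmodule ⊔ B.toSubmodule.map (D.toLinearMap ^ t)) :
    (s + t).choose s • ⁅x, y⁆ ∈
      I.toSubmodule ⊔ (⁅A, B⁆ : LieIdeal R L).toSubmodule.map (D.toLinearMap ^ (s + t)) := by
  obtain ⟨u, hu, _, ⟨a, ha, rfl⟩, rfl⟩ := Submodule.mem_sup.mp hx
  obtain ⟨v, hv, _, ⟨b, hb, rfl⟩, rfl⟩ := Submodule.mem_sup.mp hy
  set a' := (D.toLinearMap ^ s) a
  set b' := (D.toLinearMap ^ t) b
  have lie_congr : ⁅u + a', v + b'⁆ - ⁅a', b'⁆ ∈ I := by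
    have expand : ⁅u + a', v + b'⁆ - ⁅a', b'⁆ = ⁅u, v + b'⁆ + ⁅a', v⁆ := by
      rw [add_lie, lie_add a']
      abel
    rw [expand]
    exact I.add_mem (lie_mem_left R L I _ _ hu) (lie_mem_right R L I _ _ hv)
  have leading_term := derivation_pow_lie_sub_choose_smul_lie_mem
    (mem_derivationFiltration.mp (hA ha)) (mem_derivationFiltration.mp (hB hb))
  refine Submodule.mem_sup.mpr ⟨_, I.sub_mem (nsmul_mem lie_congr ((s + t).choose s)) leading_term,
    _, Submodule.mem_map_of_mem (LieSubmodule.lie_mem_lie ha hb), ?_⟩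
  rw [smul_sub]
  abel

end DerivationFiltration

section IdealSupDerivation

variable {R L : Type*} [CommRing R] [LieRing L] [LieAlgebra R L]
  (D : LieDerivation R L L) (I : LieIdeal R L)

/-- The ideal `I + D(I)`. It is built on a sum of submodules because `D(I)` alone need not be an
ideal. -/
def idealSupDerivation : LieIdeal R L where
  __ := I.toSubmodule ⊔ I.toSubmodule.map D.toLinearMap
  lie_mem {x m} hm := by
    obtain ⟨u, hu, _, ⟨v, hv, rfl⟩, rfl⟩ := Submodule.mem_sup.mp hm
    refine Submodule.mem_sup.mpr ⟨⁅x, u⁆ - ⁅D x, v⁆, I.sub_mem (I.lie_mem hu) (I.lie_mem hv),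
      D ⁅x, v⁆, Submodule.mem_map_of_mem (I.lie_mem hv), ?_⟩
    rw [D.apply_lie_eq_add, lie_add, D.coeFn_coe]
    abel

theorem idealSupDerivation_toSubmodule :
    (idealSupDerivation D I).toSubmodule = I.toSubmodule ⊔ I.toSubmodule.map D.toLinearMap :=
  rfl

theorem derivedSeriesOfIdeal_idealSupDerivation_le_sup_map_pow {k : ℕ}
    (hk : IsUnit ((2 ^ k)! : R)) :
    (derivedSeriesOfIdeal R L k (idealSupDerivation D I)).toSubmodule ≤
      I.toSubmodule ⊔ (derivedSeriesOfIdeal R L k I).toSubmodule.map (D.toLinearMap ^ 2 ^ k) := by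
  induction k with
  | zero => simp [idealSupDerivation_toSubmodule]
  | succ k ih =>
    have ih := ih (hk.natCast_factorial_of_le (Nat.pow_le_pow_right two_pos k.le_succ))
    have two_pow_succ : 2 ^ (k + 1) = 2 ^ k + 2 ^ k := by rw [pow_succ, mul_two]
    rw [two_pow_succ] at hk ⊢
    rw [derivedSeriesOfIdeal_succ, derivedSeriesOfIdeal_succ,
      LieSubmodule.lieIdeal_oper_eq_linear_span', Submodule.span_le]
    rintro _ ⟨x, hx, y, hy, rfl⟩
    have hI := derivedSeriesOfIdeal_le_derivationFiltration D I k
    have choose_smul_lie_mem := choose_smul_lie_mem_sup_map_pow hI hI (ih hx) (ih hy)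
    rw [← Nat.cast_smul_eq_nsmul R] at choose_smul_lie_mem
    exact (Submodule.smul_mem_iff_of_isUnit _
      (isUnit_natCast_choose_of_isUnit_factorial (Nat.le_add_right _ _) hk)).mp choose_smul_lie_mem

variable {I} {n : ℕ}

theorem derivedSeriesOfIdeal_idealSupDerivation_le (hn : IsUnit ((2 ^ n)! : R))
    (hI : derivedSeriesOfIdeal R L n I = ⊥) :
    derivedSeriesOfIdeal R L n (idealSupDerivation D I) ≤ I := by
  simpa [hI] using derivedSeriesOfIdeal_idealSupDerivation_le_sup_map_pow D I hn

theorem derivedSeriesOfIdeal_idealSupDerivation_eq_bot (hn : IsUnit ((2 ^ n)! : R))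
    (hI : derivedSeriesOfIdeal R L n I = ⊥) :
    derivedSeriesOfIdeal R L (n + n) (idealSupDerivation D I) = ⊥ := by
  rw [derivedSeriesOfIdeal_add, eq_bot_iff, ← hI]
  exact derivedSeriesOfIdeal_mono (derivedSeriesOfIdeal_idealSupDerivation_le D hn hI) n

end IdealSupDerivation

theorem statement9_general (R L : Type*) [CommRing R] [LieRing L] [LieAlgebra R L]
    (S : LieIdeal R L)
    (hS : S = sSup {I : LieIdeal R L | ∃ k : ℕ, derivedSeriesOfIdeal R L k I = ⊥})
    (n : ℕ) (hsolv : derivedSeriesOfIdeal R L n S = ⊥) (hn : IsUnit ((2 ^ n)! : R))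
    (D : LieDerivation R L L) :
    Submodule.map D.toLinearMap S.toSubmodule ≤ S.toSubmodule := by
  have idealSupDerivation_le : idealSupDerivation D S ≤ S := by
    conv_rhs => rw [hS]
    exact le_sSup ⟨n + n, derivedSeriesOfIdeal_idealSupDerivation_eq_bot D hn hsolv⟩
  rw [← LieSubmodule.toSubmodule_le_toSubmodule, idealSupDerivation_toSubmodule]
    at idealSupDerivation_le
  exact le_sup_right.trans idealSupDerivation_le

/-- Let `L` be a Lie algebra over a field `F` of characteristic `p > 0`,
and let `S(L)` denote the sum of all solvable ideals of `L`. If `S(L)` is solvable of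
derived length `n` with `n < log₂ p` (equivalently `2ⁿ < p`), then `S(L)` is a
characteristic ideal: `D(S(L)) ⊆ S(L)` for every derivation `D` of `L`. -/
theorem statement9 (F L : Type*) [Field F] [LieRing L] [LieAlgebra F L]
    (p : ℕ) [CharP F p] (hp : 0 < p)
    (S : LieIdeal F L)
    (hS : S = sSup {I : LieIdeal F L | ∃ k : ℕ, LieAlgebra.derivedSeriesOfIdeal F L k I = ⊥})
    (n : ℕ)
    (hsolv : LieAlgebra.derivedSeriesOfIdeal F L n S = ⊥)
    (hmin : ∀ m < n, LieAlgebra.derivedSeriesOfIdeal F L m S ≠ ⊥)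
    (hnp : 2 ^ n < p)
    (D : LieDerivation F L L) :
    Submodule.map D.toLinearMap S.toSubmodule ≤ S.toSubmodule := by
  have : Fact p.Prime := ⟨(CharP.char_is_prime_or_zero F p).resolve_right hp.ne'⟩
  exact statement9_general F L S hS n hsolv ((IsUnit.natCast_factorial_iff_of_charP p).mpr hnp) D
end

section
/- Let L be a Lie algebra over a field F of characteristic 0, let I be an abelian ideal of L, and let D be a derivation of L. Then for every positive integer k, the span [Dᵏ(I), Dᵏ(I)] of all brackets of elements of Dᵏ(I) is contained in the ideal J_{k−1} = I + D(I) + ⋯ + D^{k−1}(I). -/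
/-!
Apply the Leibniz rule to `D^[2 * k] ⁅a, b⁆ = 0` for `a`, `b` in `I`. The middle term is
`(2k choose k) • ⁅D^[k] a, D^[k] b⁆`. In each other term one factor is `D^[i] a` or `D^[i] b` with
`i < k`, so the term lies in `I + D(I) + ⋯ + D^{k-1}(I)` because this sum is an ideal.
-/

section

variable {R L : Type*} [CommRing R] [LieRing L] [LieAlgebra R L]

/-- The sum `I + D(I) + ⋯ + D^{n-1}(I)` of the first `n` iterated images of a Lie ideal under a
derivation. The paper's `J_{k-1}` is `iterateSum D I k`, so that the empty sum is `n = 0`. It is a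
mere submodule here; closure under brackets is `iterateSum.lie_mem`. -/
def iterateSum (D : LieDerivation R L L) (I : LieIdeal R L) (n : ℕ) : Submodule R L :=
  ⨆ j ∈ Finset.range n, Submodule.map (D.toLinearMap ^ j) I.toSubmodule

namespace iterateSum

variable (D : LieDerivation R L L) (I : LieIdeal R L)

theorem mono {m n : ℕ} (hmn : m ≤ n) : iterateSum D I m ≤ iterateSum D I n :=
  biSup_mono fun _ hj => Finset.range_mono hmn hj

theorem succ_eq_sup_map (n : ℕ) :
    iterateSum D I (n + 1) = I.toSubmodule ⊔ (iterateSum D I n).map D.toLinearMap := by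
  simp only [iterateSum, Finset.mem_range, Nat.iSup_lt_succ', pow_zero, Module.End.one_eq_id,
    Submodule.map_id, Submodule.map_iSup, pow_succ', Module.End.mul_eq_comp, Submodule.map_comp]

variable {D I}

theorem iterate_apply_mem {a : L} (ha : a ∈ I) {i n : ℕ} (hin : i < n) :
    D^[i] a ∈ iterateSum D I n :=
  Submodule.mem_iSup_of_mem i <| Submodule.mem_iSup_of_mem (Finset.mem_range.mpr hin)
    ⟨a, ha, Module.End.pow_apply _ _ _⟩

theorem apply_mem_succ {n : ℕ} {x : L} (hx : x ∈ iterateSum D I n) :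
    D x ∈ iterateSum D I (n + 1) := by
  rw [succ_eq_sup_map]
  exact Submodule.mem_sup_right (Submodule.mem_map_of_mem hx)

theorem lie_mem {n : ℕ} {x : L} (hx : x ∈ iterateSum D I n) (y : L) :
    ⁅x, y⁆ ∈ iterateSum D I n := by
  induction n generalizing x y with
  | zero => simp_all [iterateSum]
  | succ n ih =>
    rw [succ_eq_sup_map] at hx
    obtain ⟨a, ha, _, ⟨z, hz, rfl⟩, rfl⟩ := Submodule.mem_sup.mp hx
    have lie_a_mem : ⁅a, y⁆ ∈ iterateSum D I (n + 1) :=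
      iterate_apply_mem (i := 0) (lie_mem_left R L I a y ha) n.succ_pos
    have lie_apply_mem : ⁅D z, y⁆ ∈ iterateSum D I (n + 1) := by
      rw [eq_sub_of_add_eq' (D.apply_lie_eq_add z y).symm]
      exact sub_mem (apply_mem_succ (ih hz y)) (mono D I n.le_succ (ih hz (D y)))
    rw [add_lie]
    exact add_mem lie_a_mem lie_apply_mem

theorem centralBinom_nsmul_lie_iterate_mem {a b : L} (ha : a ∈ I) (hb : b ∈ I)
    (hab : ⁅a, b⁆ = 0) (k : ℕ) :
    k.centralBinom • ⁅D^[k] a, D^[k] b⁆ ∈ iterateSum D I k := by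
  have leibniz := D.iterate_apply_lie (2 * k) a b
  have middle : (k, k) ∈ Finset.HasAntidiagonal.antidiagonal (2 * k) := by
    simp [two_mul]
  rw [hab, iterate_map_zero, ← Finset.add_sum_erase _ _ middle] at leibniz
  rw [Nat.centralBinom_eq_two_mul_choose, eq_neg_of_add_eq_zero_left leibniz.symm]
  refine neg_mem (sum_mem fun ij hij => nsmul_mem ?_ _)
  obtain ⟨i, j⟩ := ij
  obtain ⟨hne, hsum⟩ : (i, j) ≠ (k, k) ∧ i + j = 2 * k := by simpa using hij
  obtain hi | hj : i < k ∨ j < k := by grind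
  · exact lie_mem (iterate_apply_mem ha hi) _
  · rw [← lie_skew]
    exact neg_mem (lie_mem (iterate_apply_mem hb hj) _)

end iterateSum

theorem statement11_general (I : LieIdeal R L) (habelian : (⁅I, I⁆ : LieIdeal R L) = ⊥)
    (D : LieDerivation R L L) (k : ℕ) (hk : IsUnit (k.centralBinom : R)) :
    Submodule.span R
        {z : L | ∃ x ∈ Submodule.map (D.toLinearMap ^ k) I.toSubmodule,
          ∃ y ∈ Submodule.map (D.toLinearMap ^ k) I.toSubmodule, z = ⁅x, y⁆} ≤
      iterateSum D I k := by
  rw [Submodule.span_le]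
  rintro _ ⟨_, ⟨a, ha, rfl⟩, _, ⟨b, hb, rfl⟩, rfl⟩
  have hab : ⁅a, b⁆ = 0 := (LieSubmodule.lie_eq_bot_iff I I).mp habelian a ha b hb
  have hmem := iterateSum.centralBinom_nsmul_lie_iterate_mem (D := D) ha hb hab k
  rw [← Nat.cast_smul_eq_nsmul R] at hmem
  rw [Module.End.pow_apply, Module.End.pow_apply]
  exact (Submodule.smul_mem_iff_of_isUnit _ hk).mp hmem

end

/-- Let `L` be a Lie algebra over a field `F` of characteristic `0`,
let `I` be an abelian ideal of `L`, and let `D` be a derivation of `L`. Then for every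
positive integer `k`, the span `[Dᵏ(I), Dᵏ(I)]` of all brackets of elements of `Dᵏ(I)` is
contained in the ideal `J_{k-1} = I + D(I) + ⋯ + D^{k-1}(I)`. -/
theorem statement11 (F L : Type*) [Field F] [CharZero F] [LieRing L] [LieAlgebra F L]
    (I : LieIdeal F L) (habelian : (⁅I, I⁆ : LieIdeal F L) = ⊥)
    (D : LieDerivation F L L) (k : ℕ) (hk : 0 < k) :
    Submodule.span F
        {z : L | ∃ x ∈ Submodule.map (D.toLinearMap ^ k) I.toSubmodule,
          ∃ y ∈ Submodule.map (D.toLinearMap ^ k) I.toSubmodule, z = ⁅x, y⁆} ≤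
      ⨆ j ∈ Finset.range k, Submodule.map (D.toLinearMap ^ j) I.toSubmodule := by
  exact statement11_general I habelian D k
    (Nat.cast_ne_zero.mpr k.centralBinom_ne_zero).isUnit
end
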